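/- Let n ≥ 3, I₂(x) = c_n|x|^{2−n}, and H_t(x) = (1/|B(x,t)|)∫_{B(x,t)} I₂(y) dy − I₂(x). If |x| ≥ 2|y| and t ≥ |x|/2, then |H_t(x−y) − H_t(x)| ≤ C|y|·|x|^{1−n}, and hence (∫₀^∞ |H_t(x−y) − H_t(x)|² t^{−5} dt)^{1/2} ≤ C·|y|·|x|^{−n−1}. -/

import Mathlib

open MeasureTheory

/-- `H_t(x) = ⨍_{B(x,t)} c|y|^{2-n} dy - c|x|^{2-n}`, for the fundamental
solution `I₂(x) = c|x|^{2-n}` of `-Δ`. -/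
noncomputable def newtH (n : ℕ) (c : ℝ) (t : ℝ) (x : EuclideanSpace ℝ (Fin n)) : ℝ :=
  (⨍ y in Metric.ball x t, c * ‖y‖ ^ ((2 : ℝ) - n)) - c * ‖x‖ ^ ((2 : ℝ) - n)

open scoped Pointwise

lemma aux_avg_rescale {n : ℕ} (f : EuclideanSpace ℝ (Fin n) → ℝ) (x : EuclideanSpace ℝ (Fin n))
    {t : ℝ} (ht : 0 < t) :
    (⨍ y in Metric.ball x t, f y) =
      (volume.real (Metric.ball (0 : EuclideanSpace ℝ (Fin n)) 1))⁻¹ *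
        ∫ z in Metric.ball (0 : EuclideanSpace ℝ (Fin n)) 1, f (x + t • z) := by
  rw [setAverage_eq, smul_eq_mul]
  have h1 := Measure.setIntegral_comp_smul_of_pos volume (fun z => f (x + z))
    (Metric.ball (0 : EuclideanSpace ℝ (Fin n)) 1) ht
  have h2 : t • Metric.ball (0 : EuclideanSpace ℝ (Fin n)) 1 = Metric.ball 0 t := by
    rw [smul_ball ht.ne']; simp [abs_of_pos ht]
  have h3 : ∫ z in Metric.ball (0 : EuclideanSpace ℝ (Fin n)) t, f (x + z)
      = ∫ y in Metric.ball x t, f y := by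
    have := (measurePreserving_add_left (volume : Measure (EuclideanSpace ℝ (Fin n))) x).setIntegral_preimage_emb
      (measurableEmbedding_addLeft x) f (Metric.ball x t)
    rw [← this, preimage_add_ball, sub_self]
  have h4 : volume.real (Metric.ball x t) = t ^ n *
      volume.real (Metric.ball (0 : EuclideanSpace ℝ (Fin n)) 1) := by
    rw [measureReal_def, Measure.addHaar_ball_of_pos _ _ ht, ENNReal.toReal_mul,
      ENNReal.toReal_ofReal (by positivity), finrank_euclideanSpace_fin, measureReal_def]
  rw [h1, h2, h3, h4, smul_eq_mul, finrank_euclideanSpace_fin, mul_inv]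
  ring

lemma aux_hasFDerivAt {n : ℕ} (p : ℝ) {w : EuclideanSpace ℝ (Fin n)} (hw : w ≠ 0) :
    HasFDerivAt (fun w : EuclideanSpace ℝ (Fin n) => ‖w‖ ^ p)
      ((p * ‖w‖ ^ (p - 2)) • innerSL ℝ w) w := by
  have h0 : 0 < ‖w‖ := norm_pos_iff.2 hw
  have h1 : (fun w : EuclideanSpace ℝ (Fin n) => ‖w‖ ^ p) = fun w => (‖w‖ ^ 2) ^ (p / 2) := by
    ext v
    rw [← Real.rpow_natCast, ← Real.rpow_mul (norm_nonneg _)]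
    congr 1; push_cast; ring
  rw [h1]
  have h2 := (hasStrictFDerivAt_norm_sq w).hasFDerivAt.rpow_const (p := p / 2)
    (Or.inl (by positivity))
  refine h2.congr_fderiv ?_
  rw [← Real.rpow_natCast, ← Real.rpow_mul (norm_nonneg _)]
  ext v
  simp only [smul_apply, smul_eq_mul, nsmul_eq_mul]
  have : ((2:ℕ):ℝ) * (p / 2 - 1) = p - 2 := by push_cast; ring
  rw [this]; push_cast; ring

lemma aux_harmonic {n : ℕ} {w : EuclideanSpace ℝ (Fin n)} (hw : w ≠ 0) :
    ∑ i : Fin n, fderiv ℝ (fun v => fderiv ℝ (fun w : EuclideanSpace ℝ (Fin n) =>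
      ‖w‖ ^ ((2 : ℝ) - n)) v (EuclideanSpace.single i 1)) w (EuclideanSpace.single i 1) = 0 := by
  have h0 : 0 < ‖w‖ := norm_pos_iff.2 hw
  have key : ∀ i : Fin n, fderiv ℝ (fun v => fderiv ℝ (fun w : EuclideanSpace ℝ (Fin n) =>
      ‖w‖ ^ ((2 : ℝ) - n)) v (EuclideanSpace.single i 1)) w (EuclideanSpace.single i 1)
      = (2 - n) * (-n * ‖w‖ ^ (-(n:ℝ) - 2) * w i ^ 2 + ‖w‖ ^ (-(n:ℝ))) := by
    intro i
    have e1 : (fun v => fderiv ℝ (fun w : EuclideanSpace ℝ (Fin n) =>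
      ‖w‖ ^ ((2 : ℝ) - n)) v (EuclideanSpace.single i 1)) =ᶠ[nhds w]
        fun v => (2 - n) * (‖v‖ ^ (-(n:ℝ)) * v i) := by
      filter_upwards [isOpen_ne.mem_nhds hw] with v hv
      rw [(aux_hasFDerivAt _ hv).fderiv]
      have : (2:ℝ) - n - 2 = -n := by ring
      rw [this]
      simp [EuclideanSpace.inner_single_right]
      ring
    rw [e1.fderiv_eq]
    have h3 : HasFDerivAt (fun v : EuclideanSpace ℝ (Fin n) => v i)
        (EuclideanSpace.proj (𝕜 := ℝ) i : EuclideanSpace ℝ (Fin n) →L[ℝ] ℝ) w :=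
      (EuclideanSpace.proj (𝕜 := ℝ) i : EuclideanSpace ℝ (Fin n) →L[ℝ] ℝ).hasFDerivAt
    have h4 := ((aux_hasFDerivAt (-(n:ℝ)) hw).mul h3).const_mul (2 - (n:ℝ))
    simp only [Pi.mul_apply] at h4
    rw [h4.fderiv]
    simp [EuclideanSpace.inner_single_right]
    ring_nf
  simp_rw [key]
  rw [← Finset.mul_sum, Finset.sum_add_distrib, ← Finset.mul_sum]
  have h5 : ∑ i, w i ^ 2 = ‖w‖ ^ 2 := by
    rw [EuclideanSpace.norm_sq_eq]; simp
  have h6 : ‖w‖ ^ (-(n:ℝ) - 2) * ‖w‖ ^ 2 = ‖w‖ ^ (-(n:ℝ)) := by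
    rw [← Real.rpow_natCast, ← Real.rpow_add h0]; congr 1; push_cast; ring
  rw [h5, mul_assoc, h6]
  simp

lemma aux_div {n : ℕ} (hn : 1 ≤ n) (g : EuclideanSpace ℝ (Fin n) → ℝ) (hg : ContDiff ℝ 2 g)
    (K : NNReal) (hK : LipschitzWith K (fderiv ℝ g))
    (hh : ∀ z ∈ Metric.ball (0 : EuclideanSpace ℝ (Fin n)) 1,
      ∑ i : Fin n, fderiv ℝ (fun v => fderiv ℝ g v (EuclideanSpace.single i 1)) z
        (EuclideanSpace.single i 1) = 0) :
    ∫ z in Metric.ball (0 : EuclideanSpace ℝ (Fin n)) 1, fderiv ℝ g z z = 0 := by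
  have : Nonempty (Fin n) := ⟨⟨0, hn⟩⟩
  let Ψ : EuclideanSpace ℝ (Fin n) → ℝ := fun z => 1 - (min ‖z‖ 1) ^ 2
  have hΨin : ∀ z : EuclideanSpace ℝ (Fin n), ‖z‖ ≤ 1 → Ψ z = 1 - ‖z‖ ^ 2 := fun z hz => by simp [Ψ, min_eq_left hz]
  have hΨout : ∀ z : EuclideanSpace ℝ (Fin n), 1 ≤ ‖z‖ → Ψ z = 0 := fun z hz => by simp [Ψ, min_eq_right hz]
  have hΨL : LipschitzWith 2 Ψ := by
    refine LipschitzWith.of_dist_le_mul fun a b => ?_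
    rw [Real.dist_eq]
    have h1 : |min ‖a‖ 1 - min ‖b‖ 1| ≤ dist a b := by
      have := (LipschitzWith.min_const (lipschitzWith_one_norm (E := EuclideanSpace ℝ (Fin n))) 1).dist_le_mul a b
      simpa [Real.dist_eq] using this
    have ha : 0 ≤ min ‖a‖ 1 := by positivity
    have hb : 0 ≤ min ‖b‖ 1 := by positivity
    have ha' : min ‖a‖ 1 ≤ 1 := min_le_right _ _
    have hb' : min ‖b‖ 1 ≤ 1 := min_le_right _ _
    have : Ψ a - Ψ b = -((min ‖a‖ 1 + min ‖b‖ 1) * (min ‖a‖ 1 - min ‖b‖ 1)) := by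
      simp only [Ψ]; ring
    rw [this, abs_neg, abs_mul, abs_of_nonneg (by positivity)]
    push_cast
    gcongr
    linarith
  have hΨc : HasCompactSupport Ψ := by
    refine HasCompactSupport.intro (isCompact_closedBall (0:EuclideanSpace ℝ (Fin n)) 1) fun z hz => hΨout z ?_
    simp only [Metric.mem_closedBall, dist_zero_right, not_le] at hz
    exact hz.le
  have hlin : ∀ z : EuclideanSpace ℝ (Fin n), ‖z‖ < 1 → ∀ v, lineDeriv ℝ Ψ z v = -(2 * inner ℝ z v) := by
    intro z hz v
    have he : Ψ =ᶠ[nhds z] fun z => 1 - ‖z‖ ^ 2 := by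
      filter_upwards [(isOpen_lt continuous_norm continuous_const).mem_nhds hz] with y hy
      exact hΨin y (le_of_lt hy)
    have hd : HasFDerivAt (𝕜 := ℝ) Ψ _ z :=
      (((hasStrictFDerivAt_norm_sq z).hasFDerivAt).const_sub (1:ℝ)).congr_of_eventuallyEq he
    rw [hd.differentiableAt.lineDeriv_eq_fderiv, hd.fderiv]
    simp
  have hlout : ∀ z : EuclideanSpace ℝ (Fin n), 1 < ‖z‖ → ∀ v, lineDeriv ℝ Ψ z v = 0 := by
    intro z hz v
    have he : Ψ =ᶠ[nhds z] fun z => 0 := by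
      filter_upwards [(isOpen_lt continuous_const continuous_norm).mem_nhds hz] with y hy
      exact hΨout y (le_of_lt hy)
    have hd : HasFDerivAt (𝕜 := ℝ) Ψ _ z := (hasFDerivAt_const (0:ℝ) z).congr_of_eventuallyEq he
    rw [hd.differentiableAt.lineDeriv_eq_fderiv, hd.fderiv]
    simp
  have hsph : ∀ᵐ z : EuclideanSpace ℝ (Fin n), ‖z‖ ≠ 1 := by
    have := Measure.addHaar_sphere (volume : Measure (EuclideanSpace ℝ (Fin n))) 0 1
    rw [ae_iff]
    convert this using 2
    ext z; simp
  let e : Fin n → EuclideanSpace ℝ (Fin n) := fun i => EuclideanSpace.single i 1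
  let F : Fin n → EuclideanSpace ℝ (Fin n) → ℝ := fun i v => fderiv ℝ g v (e i)
  have hFs : ∀ i, ContDiff ℝ 1 (F i) := fun i =>
    (hg.fderiv_right (m := 1) (by norm_num)).clm_apply contDiff_const
  have hFL : ∀ i, LipschitzWith K (F i) := by
    intro i
    refine LipschitzWith.of_dist_le_mul fun a b => ?_
    rw [Real.dist_eq]
    have : F i a - F i b = (fderiv ℝ g a - fderiv ℝ g b) (e i) := by simp [F]
    rw [this, ← Real.norm_eq_abs]
    refine (ContinuousLinearMap.le_opNorm _ _).trans ?_
    have h1 : ‖e i‖ = 1 := by simp [e]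
    rw [h1, mul_one, ← dist_eq_norm]
    exact hK.dist_le_mul a b
  have hparts : ∀ i, ∫ z, lineDeriv ℝ (F i) z (e i) * Ψ z =
      ∫ z in Metric.ball (0:EuclideanSpace ℝ (Fin n)) 1, 2 * (z i * F i z) := by
    intro i
    rw [LipschitzWith.integral_lineDeriv_mul_eq (hFL i) hΨL hΨc, ← integral_indicator
      measurableSet_ball]
    refine integral_congr_ae ?_
    filter_upwards [hsph] with z hz
    rcases lt_or_gt_of_ne hz with h | h
    · rw [hlin z h, Set.indicator_of_mem (by simpa using h)]
      simp [e, EuclideanSpace.inner_single_right]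
      ring
    · rw [hlout z h, Set.indicator_of_notMem (by simpa using h.le)]
      simp
  have hInt1 : ∀ i, Integrable (fun z => lineDeriv ℝ (F i) z (e i) * Ψ z) := by
    intro i
    have : (fun z => lineDeriv ℝ (F i) z (e i) * Ψ z) = fun z => fderiv ℝ (F i) z (e i) * Ψ z := by
      ext z
      rw [((hFs i).differentiable (by norm_num) z).lineDeriv_eq_fderiv]
    rw [this]
    refine Continuous.integrable_of_hasCompactSupport ?_ hΨc.mul_left
    exact (((hFs i).continuous_fderiv (by norm_num)).clm_apply continuous_const).mul hΨL.continuous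
  have hInt2 : ∀ i, IntegrableOn (fun z : EuclideanSpace ℝ (Fin n) => 2 * (z i * F i z)) (Metric.ball (0:EuclideanSpace ℝ (Fin n)) 1) := by
    intro i
    have hc : Continuous (fun z : EuclideanSpace ℝ (Fin n) => 2 * (z i * F i z)) := by
      have := (hFs i).continuous
      fun_prop
    exact (hc.continuousOn.integrableOn_compact (isCompact_closedBall (0:EuclideanSpace ℝ (Fin n)) 1)).mono_set
      Metric.ball_subset_closedBall
  have hsum : ∑ i, ∫ z, lineDeriv ℝ (F i) z (e i) * Ψ z = 0 := by
    rw [← integral_finsetSum _ fun i _ => hInt1 i]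
    have : (fun z : EuclideanSpace ℝ (Fin n) => ∑ i, lineDeriv ℝ (F i) z (e i) * Ψ z) = fun _ => 0 := by
      ext z
      rw [← Finset.sum_mul]
      rcases lt_or_ge ‖z‖ 1 with h | h
      · have := hh z (by simpa using h)
        have h2 : ∑ i, lineDeriv ℝ (F i) z (e i) = 0 := by
          rw [← this]
          refine Finset.sum_congr rfl fun i _ => ?_
          rw [((hFs i).differentiable (by norm_num) z).lineDeriv_eq_fderiv]
        rw [h2, zero_mul]
      · rw [hΨout z h, mul_zero]
    rw [this]; simp
  simp_rw [hparts] at hsum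
  rw [← integral_finsetSum _ fun i _ => hInt2 i] at hsum
  have h9 : ∀ z : EuclideanSpace ℝ (Fin n), ∑ i, 2 * (z i * F i z) = 2 * fderiv ℝ g z z := by
    intro z
    rw [← Finset.mul_sum]
    congr 1
    have hz : z = ∑ i, z i • e i := by
      ext j
      simp [e, Pi.single_apply]
    have h := congrArg (fderiv ℝ g z) hz
    rw [h, map_sum]
    simp [F]
  simp_rw [h9] at hsum
  rw [integral_const_mul] at hsum
  linarith

lemma aux_vol_pos (n : ℕ) :
    0 < volume.real (Metric.ball (0 : EuclideanSpace ℝ (Fin n)) 1) := by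
  rw [measureReal_def]
  exact ENNReal.toReal_pos (Metric.measure_ball_pos _ _ one_pos).ne' measure_ball_lt_top.ne

/-- Mean value property for globally smooth functions, harmonic on a ball. -/
lemma aux_mvp {n : ℕ} (hn : 1 ≤ n) (f : EuclideanSpace ℝ (Fin n) → ℝ) (hf : ContDiff ℝ 2 f)
    (hc : HasCompactSupport f) (x : EuclideanSpace ℝ (Fin n)) {t : ℝ} (ht : 0 < t)
    (hh : ∀ z ∈ Metric.ball x t,
      ∑ i : Fin n, fderiv ℝ (fun v => fderiv ℝ f v (EuclideanSpace.single i 1)) z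
        (EuclideanSpace.single i 1) = 0) :
    ∫ z in Metric.ball (0 : EuclideanSpace ℝ (Fin n)) 1, f (x + t • z) =
      volume.real (Metric.ball (0 : EuclideanSpace ℝ (Fin n)) 1) * f x := by
  have hf1 : ContDiff ℝ 1 (fderiv ℝ f) := hf.fderiv_right (by norm_num)
  obtain ⟨K, hK⟩ := hf1.lipschitzWith_of_hasCompactSupport (hc.fderiv ℝ) (by norm_num)
  obtain ⟨M, hM⟩ := (hc.fderiv ℝ).exists_bound_of_continuous hf1.continuous
  have hfd : ∀ z, HasFDerivAt f (fderiv ℝ f z) z := fun z =>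
    (hf.differentiable (by norm_num) z).hasFDerivAt
  have haff : ∀ (r : ℝ) (z : EuclideanSpace ℝ (Fin n)), HasFDerivAt (fun z => x + r • z)
      (r • ContinuousLinearMap.id ℝ (EuclideanSpace ℝ (Fin n))) z := fun r z =>
    ((hasFDerivAt_id z).const_smul r).const_add x
  have hsub := Metric.ball_subset_closedBall (x := (0 : EuclideanSpace ℝ (Fin n))) (ε := 1)
  have hcpt := isCompact_closedBall (0 : EuclideanSpace ℝ (Fin n)) 1
  have hfc := hf.continuous
  have hf1c := hf1.continuous
  let φ : ℝ → ℝ := fun r => ∫ z in Metric.ball (0 : EuclideanSpace ℝ (Fin n)) 1, f (x + r • z)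
  have hφ : ∀ r, HasDerivAt φ
      (∫ z in Metric.ball (0 : EuclideanSpace ℝ (Fin n)) 1, fderiv ℝ f (x + r • z) z) r := by
    intro r
    refine (hasDerivAt_integral_of_dominated_loc_of_deriv_le (bound := fun _ => M)
      (F := fun r z => f (x + r • z)) (F' := fun r z => fderiv ℝ f (x + r • z) z)
      Filter.univ_mem ?_ ?_ ?_ ?_ ?_ ?_).2
    · refine Filter.Eventually.of_forall fun r => Continuous.aestronglyMeasurable ?_
      fun_prop
    · refine IntegrableOn.mono_set (ContinuousOn.integrableOn_compact hcpt
        (Continuous.continuousOn ?_)) hsub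
      fun_prop
    · refine Continuous.aestronglyMeasurable ?_
      exact (hf1c.comp (by fun_prop)).clm_apply continuous_id
    · filter_upwards [ae_restrict_mem measurableSet_ball] with z hz r _
      have hz1 : ‖z‖ ≤ 1 := by simpa using hsub hz
      refine (ContinuousLinearMap.le_opNorm _ _).trans ?_
      calc _ ≤ M * 1 := mul_le_mul (hM _) hz1 (norm_nonneg _) ((norm_nonneg _).trans (hM 0))
        _ = M := mul_one _
    · have : IsFiniteMeasure (volume.restrict (Metric.ball (0 : EuclideanSpace ℝ (Fin n)) 1)) :=
        ⟨by simpa using measure_ball_lt_top⟩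
      exact integrable_const _
    · refine Filter.Eventually.of_forall fun z r _ => ?_
      have h1 : HasDerivAt (fun r : ℝ => x + r • z) z r := by
        simpa using ((hasDerivAt_id r).smul_const z).const_add x
      exact (hfd (x + r • z)).comp_hasDerivAt r h1
  have hzero : ∀ r ∈ Set.Icc 0 t,
      r * (∫ z in Metric.ball (0 : EuclideanSpace ℝ (Fin n)) 1, fderiv ℝ f (x + r • z) z) = 0 := by
    intro r hr
    have hgf : ∀ z, HasFDerivAt (fun z => f (x + r • z)) (r • fderiv ℝ f (x + r • z)) z := by
      intro z
      refine ((hfd (x + r • z)).comp z (haff r z)).congr_fderiv ?_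
      ext v; simp
    have hg' : fderiv ℝ (fun z => f (x + r • z)) = fun z => r • fderiv ℝ f (x + r • z) :=
      funext fun z => (hgf z).fderiv
    have := aux_div hn (fun z => f (x + r • z)) (by fun_prop) (‖r‖₊ * (K * ‖r‖₊)) ?_ ?_
    · rw [hg'] at this
      simpa [integral_const_mul] using this
    · rw [hg']
      refine LipschitzWith.of_dist_le_mul fun a b => ?_
      rw [dist_eq_norm, ← smul_sub, norm_smul, ← dist_eq_norm]
      have h1 := hK.dist_le_mul (x + r • a) (x + r • b)
      rw [dist_add_left, dist_smul₀] at h1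
      push_cast
      rw [mul_assoc, mul_assoc]
      exact mul_le_mul_of_nonneg_left h1 (norm_nonneg _)
    · intro z hz
      have hmem : x + r • z ∈ Metric.ball x t := by
        have hz1 : ‖z‖ < 1 := by simpa using hz
        simp only [Metric.mem_ball, dist_self_add_left, norm_smul, Real.norm_eq_abs,
          abs_of_nonneg hr.1]
        nlinarith [hr.1, hr.2, norm_nonneg z]
      have h0 := hh _ hmem
      rw [hg']
      have h1 : ∀ i : Fin n, fderiv ℝ (fun v => (r • fderiv ℝ f (x + r • v))
          (EuclideanSpace.single i 1)) z (EuclideanSpace.single i 1) =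
          r ^ 2 * fderiv ℝ (fun v => fderiv ℝ f v (EuclideanSpace.single i 1)) (x + r • z)
        (EuclideanSpace.single i 1) := by
        intro i
        have hd : Differentiable ℝ (fun v => fderiv ℝ f v (EuclideanSpace.single i (1:ℝ))) :=
          (hf1.clm_apply contDiff_const).differentiable (by norm_num)
        have h2 := (((hd (x + r • z)).hasFDerivAt.comp z (haff r z)).const_mul r).fderiv
        have h3 : (fun v => (r • fderiv ℝ f (x + r • v)) (EuclideanSpace.single i (1:ℝ))) =
          fun y => r * ((fun v => fderiv ℝ f v (EuclideanSpace.single i (1:ℝ))) ∘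
            fun z => x + r • z) y := by
          ext v; simp
        rw [h3, h2]
        simp; ring
      simp_rw [h1]
      rw [← Finset.mul_sum, h0, mul_zero]
  have hconst : φ t = φ 0 := by
    have hcont : ContinuousOn φ (Set.Icc 0 t) := fun r _ => (hφ r).continuousAt.continuousWithinAt
    obtain ⟨ξ, hξ, hξ'⟩ := exists_hasDerivAt_eq_slope φ _ ht hcont (fun r _ => hφ r)
    have h1 : (∫ z in Metric.ball (0 : EuclideanSpace ℝ (Fin n)) 1, fderiv ℝ f (x + ξ • z) z) = 0 := by
      rcases mul_eq_zero.1 (hzero ξ ⟨hξ.1.le, hξ.2.le⟩) with h | h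
      · exact absurd h hξ.1.ne'
      · exact h
    rw [h1] at hξ'
    rw [sub_zero, eq_div_iff ht.ne', zero_mul] at hξ'
    linarith
  have h0 : φ 0 = volume.real (Metric.ball (0 : EuclideanSpace ℝ (Fin n)) 1) * f x := by
    simp [φ]
  exact hconst.trans h0

lemma aux_newtH_zero {n : ℕ} (hn : 1 ≤ n) (c : ℝ) (x : EuclideanSpace ℝ (Fin n)) {t : ℝ}
    (ht : 0 < t) (htx : t < ‖x‖) : newtH n c t x = 0 := by
  let χ : ContDiffBump x := ⟨t, (t + ‖x‖) / 2, ht, by linarith⟩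
  let f : EuclideanSpace ℝ (Fin n) → ℝ := fun w => χ w * ‖w‖ ^ ((2 : ℝ) - n)
  have hfeq : ∀ w ∈ Metric.ball x t, f w = ‖w‖ ^ ((2 : ℝ) - n) := by
    intro w hw
    simp only [f]
    rw [χ.one_of_mem_closedBall (Metric.ball_subset_closedBall hw), one_mul]
  have hf : ContDiff ℝ 2 f := by
    rw [contDiff_iff_contDiffAt]
    intro w
    by_cases hw : w = 0
    · have : f =ᶠ[nhds w] fun _ => 0 := by
        have h0 : w ∉ tsupport χ := by
          rw [χ.tsupport_eq, hw]
          simp only [Metric.mem_closedBall, dist_zero_left, not_le, χ]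
          linarith
        filter_upwards [(isClosed_tsupport χ).isOpen_compl.mem_nhds h0] with v hv
        simp [f, image_eq_zero_of_notMem_tsupport hv]
      exact contDiffAt_const.congr_of_eventuallyEq this
    · exact χ.contDiff.contDiffAt.mul
        ((contDiffAt_id.norm ℝ hw).rpow_const_of_ne (norm_ne_zero_iff.2 hw))
  have hc : HasCompactSupport f := χ.hasCompactSupport.mul_right
  have hmv := aux_mvp hn f hf hc x ht ?_
  · unfold newtH
    rw [aux_avg_rescale _ _ ht, integral_const_mul]
    have h1 : ∫ z in Metric.ball (0 : EuclideanSpace ℝ (Fin n)) 1, ‖x + t • z‖ ^ ((2:ℝ) - n) =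
        ∫ z in Metric.ball (0 : EuclideanSpace ℝ (Fin n)) 1, f (x + t • z) := by
      refine setIntegral_congr_fun measurableSet_ball fun z hz => (hfeq _ ?_).symm
      have hz1 : ‖z‖ < 1 := by simpa using hz
      simp only [Metric.mem_ball, dist_self_add_left, norm_smul, Real.norm_eq_abs,
          abs_of_pos ht]
      nlinarith
    rw [h1, hmv, hfeq x (Metric.mem_ball_self ht)]
    have := (aux_vol_pos n).ne'
    field_simp
    ring
  · intro z hz
    have hz0 : z ≠ 0 := by
      rintro rfl
      simp at hz; linarith
    rw [← aux_harmonic hz0]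
    refine Finset.sum_congr rfl fun i _ => ?_
    have : (fun v => fderiv ℝ f v (EuclideanSpace.single i (1:ℝ))) =ᶠ[nhds z]
        (fun v => fderiv ℝ (fun w : EuclideanSpace ℝ (Fin n) =>
      ‖w‖ ^ ((2 : ℝ) - n)) v (EuclideanSpace.single i 1)) := by
      filter_upwards [Metric.isOpen_ball.mem_nhds hz] with v hv
      have : f =ᶠ[nhds v] (fun w : EuclideanSpace ℝ (Fin n) => ‖w‖ ^ ((2 : ℝ) - n)) := by
        filter_upwards [Metric.isOpen_ball.mem_nhds hv] with u hu using hfeq u hu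
      rw [this.fderiv_eq]
    rw [this.fderiv_eq]

lemma aux_scalar {n : ℕ} (hn : 3 ≤ n) {a b : ℝ} (ha : 0 ≤ a) (hb : 0 ≤ b) :
    |a ^ ((2:ℝ) - n) - b ^ ((2:ℝ) - n)| ≤
      n * |a - b| * (a ^ ((1:ℝ) - n) + b ^ ((1:ℝ) - n)) := by
  have hn' : (3:ℝ) ≤ n := by exact_mod_cast hn
  wlog hab : a ≤ b generalizing a b
  · have := this hb ha (le_of_not_ge hab)
    rw [abs_sub_comm, abs_sub_comm a b, add_comm (a ^ _)]
    exact this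
  have hbn : 0 ≤ b ^ ((1:ℝ) - n) := by positivity
  have han : 0 ≤ a ^ ((1:ℝ) - n) := by positivity
  rcases ha.eq_or_lt with rfl | ha
  · rw [Real.zero_rpow (by linarith), Real.zero_rpow (by linarith)]
    rcases hb.eq_or_lt with rfl | hb
    · rw [Real.zero_rpow (by linarith)]; simp
    · have : b ^ ((2:ℝ) - n) = b * b ^ ((1:ℝ) - n) := by
        nth_rewrite 2 [← Real.rpow_one b]
        rw [← Real.rpow_add hb]; congr 1; ring
      rw [this]
      simp only [zero_sub, abs_neg, zero_add]
      rw [abs_of_nonneg (by positivity), abs_of_pos hb]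
      have : 0 ≤ b * b ^ ((1:ℝ) - n) := by positivity
      nlinarith
  · have hmv := Convex.norm_image_sub_le_of_norm_hasDerivWithin_le (𝕜 := ℝ)
      (f := fun u : ℝ => u ^ ((2:ℝ) - n)) (f' := fun u => ((2:ℝ) - n) * u ^ ((2:ℝ) - n - 1))
      (s := Set.Icc a b) (C := n * a ^ ((1:ℝ) - n)) (x := b) (y := a) ?_ ?_ (convex_Icc a b)
      (Set.right_mem_Icc.2 hab) (Set.left_mem_Icc.2 hab)
    · rw [Real.norm_eq_abs, Real.norm_eq_abs] at hmv
      refine hmv.trans ?_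
      have : 0 ≤ n * |a - b| * b ^ ((1:ℝ) - n) := by positivity
      nlinarith
    · intro u hu
      exact (Real.hasDerivAt_rpow_const (Or.inl (ha.trans_le hu.1).ne')).hasDerivWithinAt
    · intro u hu
      have hu0 := ha.trans_le hu.1
      have e : (2:ℝ) - n - 1 = 1 - n := by ring
      rw [e, norm_mul, Real.norm_eq_abs, Real.norm_eq_abs, abs_of_nonpos (by linarith : (2:ℝ) - n ≤ 0),
        abs_of_nonneg (by positivity : 0 ≤ u ^ ((1:ℝ) - n))]
      exact mul_le_mul (by linarith) (Real.rpow_le_rpow_of_nonpos ha hu.1 (by linarith))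
        (by positivity) (by positivity)

lemma aux_locint {n : ℕ} (hn : 1 ≤ n) {α : ℝ} (hα : -(n:ℝ) < α) :
    LocallyIntegrable (fun w : EuclideanSpace ℝ (Fin n) => ‖w‖ ^ α) := by
  refine locallyIntegrable_of_norm_le_rpow (C := 1) (α := -α) ?_ ?_ ?_ ?_
  · simpa using hn
  · simp; linarith
  · refine Filter.Eventually.of_forall fun w => ?_
    rw [Real.norm_of_nonneg (by positivity), neg_neg, one_mul]
  · exact (by fun_prop : Measurable fun w : EuclideanSpace ℝ (Fin n) => ‖w‖ ^ α).aestronglyMeasurable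

lemma aux_int {n : ℕ} (hn : 1 ≤ n) {α : ℝ} (hα : -(n:ℝ) < α) (x : EuclideanSpace ℝ (Fin n))
    {t : ℝ} (ht : 0 < t) :
    IntegrableOn (fun z : EuclideanSpace ℝ (Fin n) => ‖x + t • z‖ ^ α) (Metric.ball 0 1) := by
  have h1 : IntegrableOn (fun w : EuclideanSpace ℝ (Fin n) => ‖w‖ ^ α) (Metric.ball x t) :=
    ((aux_locint hn hα).integrableOn_isCompact (isCompact_closedBall x t)).mono_set
      Metric.ball_subset_closedBall
  rw [← integrable_indicator_iff measurableSet_ball] at h1 ⊢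
  have h2 := (h1.comp_add_left x).comp_smul ht.ne'
  refine h2.congr (Filter.Eventually.of_forall fun z => ?_)
  simp only [Set.indicator, Metric.mem_ball, dist_self_add_left, norm_smul, Real.norm_eq_abs,
    abs_of_pos ht, dist_zero_right]
  congr 1
  simp only [eq_iff_iff]
  constructor
  · intro h; nlinarith
  · intro h; nlinarith

lemma aux_bound {n : ℕ} (hn : 1 ≤ n) : ∃ M : ℝ, 0 < M ∧ ∀ (x : EuclideanSpace ℝ (Fin n)) (t : ℝ),
    0 < t → ∫ z in Metric.ball (0 : EuclideanSpace ℝ (Fin n)) 1, ‖x + t • z‖ ^ ((1:ℝ) - n) ≤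
      M * t ^ ((1:ℝ) - n) := by
  have hn' : (1:ℝ) ≤ n := by exact_mod_cast hn
  let k : EuclideanSpace ℝ (Fin n) → ℝ :=
    (Metric.ball (0 : EuclideanSpace ℝ (Fin n)) 1).indicator fun w => ‖w‖ ^ ((1:ℝ) - n)
  have hk : Integrable k := by
    rw [integrable_indicator_iff measurableSet_ball]
    exact ((aux_locint hn (by linarith)).integrableOn_isCompact (isCompact_closedBall 0 1)).mono_set
      Metric.ball_subset_closedBall
  have hk0 : ∀ w, 0 ≤ k w := fun w => Set.indicator_nonneg (fun w _ => by positivity) w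
  have hV := aux_vol_pos n
  refine ⟨(∫ w, k w) + volume.real (Metric.ball (0 : EuclideanSpace ℝ (Fin n)) 1), ?_, ?_⟩
  · have : 0 ≤ ∫ w, k w := integral_nonneg_of_ae (Filter.Eventually.of_forall hk0)
    linarith
  intro x t ht
  have : IsFiniteMeasure (volume.restrict (Metric.ball (0 : EuclideanSpace ℝ (Fin n)) 1)) :=
        ⟨by simpa using measure_ball_lt_top⟩
  have hks : Integrable fun z => k (t⁻¹ • x + z) := hk.comp_add_left _
  have hpt : ∀ z, ‖x + t • z‖ ^ ((1:ℝ) - n) ≤ t ^ ((1:ℝ) - n) * (k (t⁻¹ • x + z) + 1) := by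
    intro z
    have h1 : x + t • z = t • (t⁻¹ • x + z) := by
      rw [smul_add, smul_smul, mul_inv_cancel₀ ht.ne', one_smul]
    rw [h1, norm_smul, Real.norm_of_nonneg ht.le, Real.mul_rpow ht.le (norm_nonneg _)]
    gcongr
    by_cases h : ‖t⁻¹ • x + z‖ < 1
    · simp only [k]
      rw [Set.indicator_of_mem (by simpa using h)]
      linarith
    · have := hk0 (t⁻¹ • x + z)
      have := Real.rpow_le_one_of_one_le_of_nonpos (not_lt.1 h) (by linarith : (1:ℝ) - n ≤ 0)
      linarith
  calc _ ≤ ∫ z in Metric.ball (0 : EuclideanSpace ℝ (Fin n)) 1,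
        t ^ ((1:ℝ) - n) * (k (t⁻¹ • x + z) + 1) := by
        refine integral_mono (aux_int hn (by linarith) x ht) ?_ hpt
        exact ((hks.integrableOn).add (integrable_const _)).const_mul _
    _ = t ^ ((1:ℝ) - n) * ((∫ z in Metric.ball (0 : EuclideanSpace ℝ (Fin n)) 1, k (t⁻¹ • x + z)) +
        volume.real (Metric.ball (0 : EuclideanSpace ℝ (Fin n)) 1)) := by
        rw [integral_const_mul, integral_add hks.integrableOn (integrable_const _)]
        simp
    _ ≤ t ^ ((1:ℝ) - n) * ((∫ z, k z) +
        volume.real (Metric.ball (0 : EuclideanSpace ℝ (Fin n)) 1)) := by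
        gcongr
        rw [← integral_add_left_eq_self k (t⁻¹ • x)]
        exact setIntegral_le_integral hks (Filter.Eventually.of_forall fun z => hk0 _)
    _ = _ := mul_comm _ _

lemma aux_part1 {n : ℕ} (hn : 3 ≤ n) (c : ℝ) :
    ∃ C : ℝ, 0 < C ∧ ∀ x y : EuclideanSpace ℝ (Fin n), x ≠ 0 → 2 * ‖y‖ ≤ ‖x‖ →
      ∀ t : ℝ, ‖x‖ / 2 ≤ t →
        |newtH n c t (x - y) - newtH n c t x| ≤ C * ‖y‖ * ‖x‖ ^ ((1 : ℝ) - n) := by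
  have hn' : (3:ℝ) ≤ n := by exact_mod_cast hn
  have hn1 : 1 ≤ n := by omega
  obtain ⟨M, hM, hMb⟩ := aux_bound hn1
  have hV := aux_vol_pos n
  set V := volume.real (Metric.ball (0 : EuclideanSpace ℝ (Fin n)) 1) with hVdef
  set D : ℝ := (1/2:ℝ) ^ ((1:ℝ) - n) with hD
  have hDp : 0 < D := by positivity
  have hD1 : 1 ≤ D := by
    exact Real.one_le_rpow_of_pos_of_le_one_of_nonpos (by norm_num) (by norm_num) (by linarith)
  refine ⟨(|c| + 1) * (V⁻¹ * (n * (2 * (M * D))) + n * (2 * D)), by positivity, ?_⟩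
  intro x y hx hxy t ht
  have hx0 : 0 < ‖x‖ := norm_pos_iff.2 hx
  have ht0 : 0 < t := by linarith
  have hhalf : (‖x‖ / 2) ^ ((1:ℝ) - n) = D * ‖x‖ ^ ((1:ℝ) - n) := by
    rw [hD, ← Real.mul_rpow (by norm_num) hx0.le]; congr 1; ring
  have hpow : ∀ s, ‖x‖ / 2 ≤ s → s ^ ((1:ℝ) - n) ≤ D * ‖x‖ ^ ((1:ℝ) - n) := by
    intro s hs
    rw [← hhalf]
    exact Real.rpow_le_rpow_of_nonpos (by positivity) hs (by linarith)
  have hxmy : ‖x‖ / 2 ≤ ‖x - y‖ := by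
    have := norm_sub_norm_le x y; linarith
  have hpt : ∀ u v : EuclideanSpace ℝ (Fin n), ‖u - v‖ = ‖y‖ →
      |‖u‖ ^ ((2:ℝ) - n) - ‖v‖ ^ ((2:ℝ) - n)| ≤
        n * ‖y‖ * (‖u‖ ^ ((1:ℝ) - n) + ‖v‖ ^ ((1:ℝ) - n)) := by
    intro u v huv
    refine (aux_scalar hn (norm_nonneg u) (norm_nonneg v)).trans ?_
    gcongr
    rw [← huv]; exact abs_norm_sub_norm_le u v
  set P := ‖x‖ ^ ((1:ℝ) - n) with hP
  have hPp : 0 < P := by positivity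
  have hA : |‖x - y‖ ^ ((2:ℝ) - n) - ‖x‖ ^ ((2:ℝ) - n)| ≤ n * ‖y‖ * (2 * (D * P)) := by
    refine (hpt _ _ (by simp)).trans ?_
    gcongr
    have := hpow _ hxmy
    have := hpow ‖x‖ (by linarith)
    linarith
  have hi2 : ∀ u : EuclideanSpace ℝ (Fin n), IntegrableOn (fun z : EuclideanSpace ℝ (Fin n) =>
      ‖u + t • z‖ ^ ((2:ℝ) - n)) (Metric.ball 0 1) := fun u => aux_int hn1 (by linarith) u ht0
  have hi1 : ∀ u : EuclideanSpace ℝ (Fin n), IntegrableOn (fun z : EuclideanSpace ℝ (Fin n) =>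
      ‖u + t • z‖ ^ ((1:ℝ) - n)) (Metric.ball 0 1) := fun u => aux_int hn1 (by linarith) u ht0
  have hB : |(∫ z in Metric.ball (0 : EuclideanSpace ℝ (Fin n)) 1, ‖x - y + t • z‖ ^ ((2:ℝ) - n)) -
      ∫ z in Metric.ball (0 : EuclideanSpace ℝ (Fin n)) 1, ‖x + t • z‖ ^ ((2:ℝ) - n)| ≤
      n * ‖y‖ * (2 * (M * (D * P))) := by
    rw [← integral_sub (hi2 _) (hi2 _)]
    refine (abs_integral_le_integral_abs).trans ?_
    calc _ ≤ ∫ z in Metric.ball (0 : EuclideanSpace ℝ (Fin n)) 1,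
          n * ‖y‖ * (‖x - y + t • z‖ ^ ((1:ℝ) - n) + ‖x + t • z‖ ^ ((1:ℝ) - n)) := by
          refine integral_mono ((hi2 _).sub (hi2 _)).abs
            (((hi1 _).add (hi1 _)).const_mul _) fun z => hpt _ _ ?_
          rw [add_sub_add_right_eq_sub]; simp
      _ = n * ‖y‖ * ((∫ z in Metric.ball (0 : EuclideanSpace ℝ (Fin n)) 1, ‖x - y + t • z‖ ^ ((1:ℝ) - n)) +
          ∫ z in Metric.ball (0 : EuclideanSpace ℝ (Fin n)) 1, ‖x + t • z‖ ^ ((1:ℝ) - n)) := by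
          rw [integral_const_mul, integral_add (hi1 _) (hi1 _)]
      _ ≤ _ := by
          have h1 := hMb (x - y) t ht0
          have h2 := hMb x t ht0
          have h3 : M * t ^ ((1:ℝ) - n) ≤ M * (D * P) := by
            gcongr; exact hpow t ht
          gcongr
          linarith
  unfold newtH
  rw [aux_avg_rescale _ _ ht0, aux_avg_rescale _ _ ht0, integral_const_mul, integral_const_mul,
    ← hVdef]
  set I1 := ∫ z in Metric.ball (0 : EuclideanSpace ℝ (Fin n)) 1, ‖x - y + t • z‖ ^ ((2:ℝ) - n)
  set I2 := ∫ z in Metric.ball (0 : EuclideanSpace ℝ (Fin n)) 1, ‖x + t • z‖ ^ ((2:ℝ) - n)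
  have e : V⁻¹ * (c * I1) - c * ‖x - y‖ ^ ((2:ℝ) - n) - (V⁻¹ * (c * I2) - c * ‖x‖ ^ ((2:ℝ) - n)) =
      c * (V⁻¹ * (I1 - I2) - (‖x - y‖ ^ ((2:ℝ) - n) - ‖x‖ ^ ((2:ℝ) - n))) := by ring
  rw [e, abs_mul]
  calc _ ≤ (|c| + 1) * (V⁻¹ * (n * ‖y‖ * (2 * (M * (D * P)))) + n * ‖y‖ * (2 * (D * P))) := by
        gcongr
        · linarith
        · refine (abs_sub _ _).trans ?_
          rw [abs_mul, abs_of_pos (inv_pos.2 hV)]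
          gcongr
    _ = _ := by ring

theorem stmt_14 (n : ℕ) (hn : 3 ≤ n) (c : ℝ) :
    ∃ C : ℝ, 0 < C ∧ ∀ x y : EuclideanSpace ℝ (Fin n),
      2 * ‖y‖ ≤ ‖x‖ →
      (∀ t : ℝ, ‖x‖ / 2 ≤ t →
        |newtH n c t (x - y) - newtH n c t x| ≤ C * ‖y‖ * ‖x‖ ^ ((1 : ℝ) - n)) ∧
      Real.sqrt (∫ t in Set.Ioi (0 : ℝ),
          (newtH n c t (x - y) - newtH n c t x) ^ 2 / t ^ 5) ≤
        C * ‖y‖ * ‖x‖ ^ (-(n : ℝ) - 1) := by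
  obtain ⟨K, hK, hb⟩ := aux_part1 hn c
  refine ⟨2 * K, by positivity, fun x y hxy => ?_⟩
  by_cases hx : x = 0
  · have hy : y = 0 := by
      rw [hx, norm_zero] at hxy
      exact norm_le_zero_iff.1 (by linarith)
    subst hx hy
    simp
  have hx0 : 0 < ‖x‖ := norm_pos_iff.2 hx
  have h1 := hb x y hx hxy
  refine ⟨fun t ht => (h1 t ht).trans ?_, ?_⟩
  · gcongr; linarith
  set A := K * ‖y‖ * ‖x‖ ^ ((1:ℝ) - n) with hA
  have hA0 : 0 ≤ A := by positivity
  set a := ‖x‖ / 2 with ha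
  have ha0 : 0 < a := by positivity
  have hxmy : a ≤ ‖x - y‖ := by
    have := norm_sub_norm_le x y; linarith
  have hI : ∫ t in Set.Ioi (0 : ℝ), (newtH n c t (x - y) - newtH n c t x) ^ 2 / t ^ 5 ≤
      A ^ 2 * (a ^ (-4:ℝ) / 4) := by
    have hInt : IntegrableOn (fun t : ℝ => A ^ 2 * t ^ (-5:ℝ)) (Set.Ioi a) :=
      (integrableOn_Ioi_rpow_of_lt (by norm_num) ha0).const_mul _
    calc _ ≤ ∫ t in Set.Ioi (0:ℝ), (Set.Ioi a).indicator (fun t : ℝ => A ^ 2 * t ^ (-5:ℝ)) t := by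
          refine integral_mono_of_nonneg ?_ ?_ ?_
          · filter_upwards [ae_restrict_mem measurableSet_Ioi] with t ht
            have : (0:ℝ) < t := ht
            simp only [Pi.zero_apply]
            positivity
          · exact ((integrable_indicator_iff measurableSet_Ioi).2 hInt).integrableOn
          · have hne : ∀ᵐ t : ℝ ∂(volume.restrict (Set.Ioi 0)), t ≠ a :=
              ae_restrict_of_ae (Measure.ae_ne volume a)
            filter_upwards [ae_restrict_mem measurableSet_Ioi, hne] with t ht hta
            have ht : (0:ℝ) < t := ht
            rcases lt_or_gt_of_ne hta with h | h
            · rw [aux_newtH_zero (by omega) c _ ht (h.trans_le hxmy),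
                aux_newtH_zero (by omega) c _ ht (by linarith),
                Set.indicator_of_notMem (by simpa using h.le)]
              simp
            · rw [Set.indicator_of_mem (by simpa using h), Real.rpow_neg ht.le, div_eq_mul_inv]
              have h5 : t ^ (5:ℝ) = t ^ 5 := by exact_mod_cast Real.rpow_natCast t 5
              rw [h5]
              gcongr ?_ * _
              rw [← sq_abs]
              have := h1 t h.le
              gcongr
      _ = ∫ t in Set.Ioi a, A ^ 2 * t ^ (-5:ℝ) := by
          rw [setIntegral_indicator measurableSet_Ioi, Set.Ioi_inter_Ioi, sup_of_le_right ha0.le]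
      _ = _ := by
          rw [integral_const_mul, integral_Ioi_rpow_of_lt (by norm_num) ha0]
          norm_num
  rw [Real.sqrt_le_left (by positivity)]
  refine hI.trans (le_of_eq ?_)
  have h4 : a ^ (-4:ℝ) = 16 * (‖x‖ ^ (-2:ℝ)) ^ 2 := by
    rw [Real.rpow_neg ha0.le, Real.rpow_neg hx0.le]
    have e4 : a ^ (4:ℝ) = a ^ 4 := by exact_mod_cast Real.rpow_natCast a 4
    have e2 : ‖x‖ ^ (2:ℝ) = ‖x‖ ^ 2 := by exact_mod_cast Real.rpow_natCast ‖x‖ 2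
    rw [e4, e2, ha]
    field_simp
    norm_num
  have h6 : ‖x‖ ^ (-(n:ℝ) - 1) = ‖x‖ ^ ((1:ℝ) - n) * ‖x‖ ^ (-2:ℝ) := by
    rw [← Real.rpow_add hx0]; congr 1; ring
  rw [h4, h6, hA]
  ring
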